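/- Let R = k[x_1,...,x_n] with k a field, and let P be a p×q homogeneous matrix over the graded dual k[X] = ⊕_j Hom_k(R_j, k) (divided powers), viewed as a map P: ⊕_{j=1}^p R(b_j) → ⊕_{i=1}^q k[X](a_i). Then there is a natural isomorphism of graded R-modules M(Pᵗ) ≅ Hom_k(M(P), k), where M(P) = ⊕_j R(b_j)/Ann_R(P) and Ann_R(P) = { φ : ⟨P_i, φ⟩ = 0 for all rows P_i }. -/

import Mathlib

open MvPolynomial TensorProduct

variable {k : Type*} [Field k]


/-- The contragredient scalar action `(r • f) m = f (r • m)`. -/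
noncomputable def contraSMul {R M : Type*} [CommRing R] [Algebra k R]
    [AddCommGroup M] [Module k M] [Module R M] [IsScalarTower k R M]
    (r : R) (f : M →ₗ[k] k) : M →ₗ[k] k where
  toFun m := f (r • m)
  map_add' a b := by
    show f (r • (a + b)) = f (r • a) + f (r • b)
    rw [smul_add, map_add]
  map_smul' c a := by
    show f (r • c • a) = c • f (r • a)
    rw [smul_comm r c a, map_smul]

/-- The contragredient `R`-module structure on the `k`-linear dual of an `R`-module `M`. -/
noncomputable instance contragredientModule
    {R M : Type*} [CommRing R] [Algebra k R]
    [AddCommGroup M] [Module k M] [Module R M] [IsScalarTower k R M] :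
    Module R (M →ₗ[k] k) where
  smul := contraSMul
  one_smul f := LinearMap.ext fun m => by
    show f ((1 : R) • m) = f m
    rw [one_smul]
  mul_smul r s f := LinearMap.ext fun m => by
    show f ((r * s) • m) = f (s • r • m)
    rw [mul_comm, mul_smul]
  smul_zero r := LinearMap.ext fun m => by
    show (0 : M →ₗ[k] k) (r • m) = 0
    simp
  smul_add r f g := LinearMap.ext fun m => by
    show (f + g) (r • m) = f (r • m) + g (r • m)
    simp
  add_smul r s f := LinearMap.ext fun m => by
    show f ((r + s) • m) = f (r • m) + f (s • m)
    rw [add_smul, map_add]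
  zero_smul f := LinearMap.ext fun m => by
    show f ((0 : R) • m) = 0
    rw [zero_smul, map_zero]

variable {n : ℕ}

/-- A functional on `R = k[x_1,…,x_n]` lies in the graded dual (the divided power
algebra `k[X]`) iff it vanishes on all monomials of sufficiently large degree. -/
def IsDividedPower (f : MvPolynomial (Fin n) k →ₗ[k] k) : Prop :=
  ∃ N : ℕ, ∀ u : Fin n →₀ ℕ, N ≤ u.sum (fun _ e => e) →
    f (monomial u 1) = 0

variable {p q : ℕ}

/-- The annihilator `Ann_R(P)` of a `q × p` matrix `P` in divided powers:
all `φ ∈ ⊕_j R` with `⟨P_i, φ⟩ = Σ_j φ_j · P_{ij} = 0` for every row `i`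
(the action being the contraction action of `R` on its graded dual). -/
noncomputable def annP (P : Fin q → Fin p → (MvPolynomial (Fin n) k →ₗ[k] k)) :
    Submodule (MvPolynomial (Fin n) k) (Fin p → MvPolynomial (Fin n) k) where
  carrier := {φ | ∀ i, ∑ j, φ j • P i j = 0}
  add_mem' := fun {a b} ha hb i => by
    have : ∀ j ∈ Finset.univ, ((a + b) j) • P i j = a j • P i j + b j • P i j :=
      fun j _ => by rw [Pi.add_apply, add_smul]
    rw [Finset.sum_congr rfl this, Finset.sum_add_distrib, ha i, hb i, add_zero]
  zero_mem' := fun i => by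
    have : ∀ j ∈ Finset.univ,
        ((0 : Fin p → MvPolynomial (Fin n) k) j) • P i j = 0 :=
      fun j _ => by rw [Pi.zero_apply, zero_smul]
    rw [Finset.sum_congr rfl this, Finset.sum_const_zero]
  smul_mem' := fun r a ha => fun i => by
    have : ∀ j ∈ Finset.univ, ((r • a) j) • P i j = r • (a j • P i j) :=
      fun j _ => by rw [Pi.smul_apply, smul_eq_mul, mul_smul]
    rw [Finset.sum_congr rfl this, ← Finset.smul_sum, ha i, smul_zero]

/-- The module `M(P) = (⊕_j R) / Ann_R(P)` defined by a matrix `P` in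
divided powers. -/
noncomputable abbrev MP (P : Fin q → Fin p → (MvPolynomial (Fin n) k →ₗ[k] k)) :
    Type _ :=
  (Fin p → MvPolynomial (Fin n) k) ⧸ annP P

/-!
A matrix `P` of functionals on `R` pairs `R^q` with `R^p` by `(ψ, φ) ↦ ∑ i j, P i j (φ j * ψ i)`.
The kernels on the two sides are `Ann_R(Pᵗ)` and `Ann_R(P)`, so the pairing descends to one of
`M(Pᵗ)` with `M(P)` that is nondegenerate on both sides. Divided powers of degree `< N` form a
finite-dimensional `R`-module, and `M(P)` embeds into a power of it; a nondegenerate pairing with a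
finite-dimensional space is perfect.
-/

section Duality

variable {R M N : Type*} [CommRing R] [Algebra k R]
  [AddCommGroup M] [Module k M] [Module R M] [IsScalarTower k R M]
  [AddCommGroup N] [Module R N]

/-- The pointwise `k`-module structure on a `k`-linear dual. Instance search would otherwise find
`contragredientModule` with `R = k`, which is not definitionally equal to the structure that
Mathlib's duality lemmas use. -/
noncomputable abbrev pointwiseDualModule : Module k (M →ₗ[k] k) :=
  LinearMap.module

attribute [local instance] pointwiseDualModule

theorem contragredient_smul_apply (r : R) (f : M →ₗ[k] k) (m : M) : (r • f) m = f (r • m) :=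
  rfl

instance contragredient_isScalarTower : IsScalarTower k R (M →ₗ[k] k) where
  smul_assoc c r f := LinearMap.ext fun m => by
    rw [contragredient_smul_apply, smul_assoc, map_smul, LinearMap.smul_apply,
      contragredient_smul_apply]

theorem contragredient_surjective_of_separatingRight [Module.Finite k M] [Module k N]
    [IsScalarTower k R N]
    (B : N →ₗ[R] (M →ₗ[k] k)) (hB : ∀ m, (∀ n, B n m = 0) → m = 0) :
    Function.Surjective B := by
  let B' : N →ₗ[k] Module.Dual k M := B.restrictScalars k
  have flip_injective : Function.Injective B'.flip :=
    (injective_iff_map_eq_zero _).2 fun m hm => hB m fun n => LinearMap.congr_fun hm n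
  exact LinearMap.flip_injective_iff₂.1 flip_injective

/-- The pairing of `N` with `M ⧸ K` induced by a pairing `B` of `N` with `M` (encoded as a map to
the contragredient dual) whose right kernel contains `K`. -/
noncomputable def contragredientLiftQ (B : N →ₗ[R] (M →ₗ[k] k)) (K : Submodule R M)
    (hK : ∀ n, ∀ m ∈ K, B n m = 0) : N →ₗ[R] ((M ⧸ K) →ₗ[k] k) where
  toFun n := (K.restrictScalars k).liftQ (B n) (hK n)
  map_add' a b := LinearMap.ext fun x => by
    obtain ⟨m, rfl⟩ := K.mkQ_surjective x
    exact LinearMap.congr_fun (map_add B a b) m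
  map_smul' r a := LinearMap.ext fun x => by
    obtain ⟨m, rfl⟩ := K.mkQ_surjective x
    exact LinearMap.congr_fun (map_smul B r a) m

theorem contragredientLiftQ_mk (B : N →ₗ[R] (M →ₗ[k] k)) (K : Submodule R M)
    (hK : ∀ n, ∀ m ∈ K, B n m = 0) (n : N) (m : M) :
    contragredientLiftQ B K hK n (K.mkQ m) = B n m :=
  rfl

theorem ker_contragredientLiftQ (B : N →ₗ[R] (M →ₗ[k] k)) (K : Submodule R M)
    (hK : ∀ n, ∀ m ∈ K, B n m = 0) :
    LinearMap.ker (contragredientLiftQ B K hK) = LinearMap.ker B := by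
  ext n
  simp only [LinearMap.mem_ker, LinearMap.ext_iff, K.mkQ_surjective.forall,
    contragredientLiftQ_mk, LinearMap.zero_apply]

/-- If `B` and `B'` are the two curried forms of one `R`-balanced pairing of `N` with `M`, the
quotient of `N` by its kernel is the contragredient dual of the quotient of `M` by its kernel, as
soon as the latter is finite-dimensional. -/
noncomputable def quotKerEquivContragredient [Module k N] [IsScalarTower k R N]
    (B : N →ₗ[R] (M →ₗ[k] k)) (B' : M →ₗ[R] (N →ₗ[k] k)) (hBB' : ∀ n m, B n m = B' m n)
    [Module.Finite k (M ⧸ LinearMap.ker B')] :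
    (N ⧸ LinearMap.ker B) ≃ₗ[R] ((M ⧸ LinearMap.ker B') →ₗ[k] k) :=
  have vanish : ∀ n, ∀ m ∈ LinearMap.ker B', B n m = 0 := fun n m hm =>
    (hBB' n m).trans (LinearMap.congr_fun hm n)
  have separating : ∀ x, (∀ n, contragredientLiftQ B _ vanish n x = 0) → x = 0 := by
    intro x hx
    obtain ⟨m, rfl⟩ := (LinearMap.ker B').mkQ_surjective x
    refine (Submodule.Quotient.mk_eq_zero _).2 (LinearMap.ext fun n => ?_)
    exact (hBB' n m).symm.trans (hx n)
  (Submodule.quotEquivOfEq _ _ (ker_contragredientLiftQ B _ vanish).symm).trans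
    ((contragredientLiftQ B _ vanish).quotKerEquivOfSurjective
      (contragredient_surjective_of_separatingRight _ separating))

variable (k R M) in
/-- The contragredient dual of a finite power is the power of the contragredient dual. -/
noncomputable def piContragredientEquiv (ι : Type*) [Fintype ι] [DecidableEq ι] :
    (ι → (M →ₗ[k] k)) ≃ₗ[R] ((ι → M) →ₗ[k] k) where
  __ := LinearMap.lsum k (fun _ : ι => M) ℕ
  map_smul' r f := LinearMap.ext fun m => by
    simp [contragredient_smul_apply]

theorem piContragredientEquiv_apply {ι : Type*} [Fintype ι] [DecidableEq ι]
    (f : ι → (M →ₗ[k] k)) (m : ι → M) :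
    piContragredientEquiv k R M ι f m = ∑ i, f i (m i) :=
  LinearMap.sum_apply _ _ _

end Duality

section Contraction

variable {A W ι κ : Type*} [CommRing A] [Algebra k A] [AddCommGroup W] [Module A W] [Fintype ι]

variable (A) in
/-- A matrix `P` with entries in an `A`-module, as the map `φ ↦ (∑ j, φ j • P i j)_i`. For `W` the
graded dual of `A` this is the map the paper denotes `P`. -/
def contractionMap (P : κ → ι → W) : (ι → A) →ₗ[A] (κ → W) :=
  LinearMap.pi fun i => Fintype.linearCombination A (P i)

theorem contractionMap_apply (P : κ → ι → W) (φ : ι → A) (i : κ) :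
    contractionMap A P φ i = ∑ j, φ j • P i j :=
  rfl

theorem finite_quotient_ker_contractionMap [Finite κ] [Module k W] [IsScalarTower k A W]
    (D : Submodule A W) [Module.Finite k D] {P : κ → ι → W} (hP : ∀ i j, P i j ∈ D) :
    Module.Finite k ((ι → A) ⧸ LinearMap.ker (contractionMap A P)) := by
  let Q : κ → ι → D := fun i j => ⟨P i j, hP i j⟩
  have ker_eq : LinearMap.ker (contractionMap A P) = LinearMap.ker (contractionMap A Q) := by
    ext φ
    simp [Q, funext_iff, Subtype.ext_iff, contractionMap_apply]
  rw [ker_eq]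
  let embed := (LinearMap.ker (contractionMap A Q)).liftQ (contractionMap A Q) le_rfl
  have embed_injective : Function.Injective embed :=
    LinearMap.ker_eq_bot.1 (Submodule.ker_liftQ_eq_bot' _ _ rfl)
  exact Module.Finite.of_injective (embed.restrictScalars k) embed_injective

variable [Fintype κ] [DecidableEq κ]

/-- The pairing `(φ, ψ) ↦ ∑ i j, P i j (φ j * ψ i)` defined by a matrix of functionals on `A`. -/
noncomputable def contractionPairing (P : κ → ι → (A →ₗ[k] k)) :
    (ι → A) →ₗ[A] ((κ → A) →ₗ[k] k) :=
  (piContragredientEquiv k A A κ).toLinearMap ∘ₗ contractionMap A P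

theorem contractionPairing_apply (P : κ → ι → (A →ₗ[k] k)) (φ : ι → A) (ψ : κ → A) :
    contractionPairing P φ ψ = ∑ i, ∑ j, P i j (φ j * ψ i) := by
  simp [contractionPairing, piContragredientEquiv_apply, contractionMap_apply,
    contragredient_smul_apply]

theorem ker_contractionPairing (P : κ → ι → (A →ₗ[k] k)) :
    LinearMap.ker (contractionPairing P) = LinearMap.ker (contractionMap A P) :=
  LinearMap.ker_comp_of_ker_eq_bot _ (piContragredientEquiv k A A κ).ker

theorem contractionPairing_transpose [DecidableEq ι] (P : κ → ι → (A →ₗ[k] k)) (φ : ι → A)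
    (ψ : κ → A) : contractionPairing (fun j i => P i j) ψ φ = contractionPairing P φ ψ := by
  rw [contractionPairing_apply, contractionPairing_apply, Finset.sum_comm]
  simp only [mul_comm]

end Contraction

section DividedPowers

variable {σ : Type*}

/-- The divided powers of degree `< N`: the functionals on the polynomial ring that vanish on every
monomial of degree at least `N`. -/
def dividedPowersDegreeLT (k σ : Type*) [Field k] (N : ℕ) :
    Submodule (MvPolynomial σ k) (MvPolynomial σ k →ₗ[k] k) where
  carrier := {f | ∀ u : σ →₀ ℕ, N ≤ u.degree → f (monomial u 1) = 0}
  add_mem' hf hg u hu := by rw [LinearMap.add_apply, hf u hu, hg u hu, add_zero]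
  zero_mem' _ _ := rfl
  smul_mem' r f hf u hu := by
    rw [contragredient_smul_apply, smul_eq_mul]
    induction r using MvPolynomial.induction_on' with
    | monomial v a =>
      have degree_le : N ≤ (v + u).degree := by rw [map_add]; exact hu.trans le_add_self
      rw [monomial_mul, mul_one, ← mul_one a, ← smul_eq_mul, ← smul_monomial, map_smul,
        hf _ degree_le, smul_zero]
    | add r s hr hs => rw [add_mul, map_add, hr, hs, add_zero]

theorem dividedPowersDegreeLT_mono : Monotone (dividedPowersDegreeLT k σ) :=
  fun _ _ hNN' _ hf u hu => hf u (hNN'.trans hu)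

theorem exists_forall_mem_dividedPowersDegreeLT {ι : Type*} [Finite ι]
    {f : ι → (MvPolynomial (Fin n) k →ₗ[k] k)} (hf : ∀ i, IsDividedPower (f i)) :
    ∃ N, ∀ i, f i ∈ dividedPowersDegreeLT k (Fin n) N := by
  choose N hN using hf
  obtain ⟨N', hN'⟩ := Finite.exists_le N
  exact ⟨N', fun i => dividedPowersDegreeLT_mono (hN' i) (hN i)⟩

attribute [local instance] pointwiseDualModule

instance finite_dividedPowersDegreeLT [Finite σ] (N : ℕ) :
    Module.Finite k (dividedPowersDegreeLT k σ N) := by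
  have : Finite {u : σ →₀ ℕ // u.degree ≤ N} := Finsupp.finite_of_degree_le N
  let coeffs : dividedPowersDegreeLT k σ N →ₗ[k] ({u : σ →₀ ℕ // u.degree ≤ N} → k) :=
    LinearMap.pi (fun u => LinearMap.applyₗ (monomial u.1 1)) ∘ₗ
      (dividedPowersDegreeLT k σ N).subtype.restrictScalars k
  have coeffs_injective : Function.Injective coeffs := by
    intro f g hfg
    refine Subtype.ext ((basisMonomials σ k).ext fun u => ?_)
    rw [coe_basisMonomials]
    obtain hu | hu := le_total u.degree N
    · exact congrFun hfg ⟨u, hu⟩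
    · exact (f.2 u hu).trans (g.2 u hu).symm
  exact Module.Finite.of_injective coeffs coeffs_injective

theorem annP_eq_ker_contractionMap (P : Fin q → Fin p → (MvPolynomial (Fin n) k →ₗ[k] k)) :
    annP P = LinearMap.ker (contractionMap _ P) :=
  Submodule.ext fun _ => funext_iff.symm

theorem finite_quotient_ker_contractionMap_of_isDividedPower {ι κ : Type*} [Fintype ι] [Finite κ]
    {P : κ → ι → (MvPolynomial (Fin n) k →ₗ[k] k)} (hP : ∀ i j, IsDividedPower (P i j)) :
    Module.Finite k ((ι → MvPolynomial (Fin n) k) ⧸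
      LinearMap.ker (contractionMap (MvPolynomial (Fin n) k) P)) := by
  obtain ⟨N, hN⟩ := exists_forall_mem_dividedPowersDegreeLT
    (f := fun ij : κ × ι => P ij.1 ij.2) fun ij => hP ij.1 ij.2
  exact finite_quotient_ker_contractionMap (dividedPowersDegreeLT k (Fin n) N) fun i j => hN (i, j)

end DividedPowers

theorem MP_transpose_iso_dual_general {A ι κ : Type*} [CommRing A] [Algebra k A] [Fintype ι]
    [Fintype κ] (P : κ → ι → (A →ₗ[k] k))
    [Module.Finite k ((ι → A) ⧸ LinearMap.ker (contractionMap A P))] :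
    Nonempty (((κ → A) ⧸ LinearMap.ker (contractionMap A fun j i => P i j)) ≃ₗ[A]
      (((ι → A) ⧸ LinearMap.ker (contractionMap A P)) →ₗ[k] k)) := by
  classical
  have : Module.Finite k ((ι → A) ⧸ LinearMap.ker (contractionPairing P)) := by
    rwa [ker_contractionPairing]
  rw [← ker_contractionPairing, ← ker_contractionPairing]
  exact ⟨quotKerEquivContragredient _ _ fun ψ φ => contractionPairing_transpose P φ ψ⟩

/-- For a matrix `P` in divided powers there is a natural isomorphism
of `R`-modules `M(Pᵗ) ≅ Hom_k(M(P), k)` (the dual carrying the contragredient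
action). -/
theorem MP_transpose_iso_dual
    (P : Fin q → Fin p → (MvPolynomial (Fin n) k →ₗ[k] k))
    (hP : ∀ i j, IsDividedPower (P i j)) :
    Nonempty ((MP fun j i => P i j) ≃ₗ[MvPolynomial (Fin n) k]
      ((MP P) →ₗ[k] k)) := by
  have := finite_quotient_ker_contractionMap_of_isDividedPower hP
  unfold MP
  rw [annP_eq_ker_contractionMap P, annP_eq_ker_contractionMap fun j i => P i j]
  exact MP_transpose_iso_dual_general P
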